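/- Let A', A, B', B be finite nonempty types, ρ : Matrix (A' × A × B') (A' × A × B') ℂ positive semidefinite, and J : Matrix (A × B) (A × B) ℂ positive semidefinite. Define ω : Matrix (A' × B × B') (A' × B × B') ℂ by ω (a',b,b') (â',b̂,b̂') = ∑_{a,â} ρ (a',a,b') (â',â,b̂') * J (a,b) (â,b̂). Define Wρ := sInf {t : ℝ | ∃ C, C admits a separable decomposition across (A'×A):B' ∧ ρ ≤ C ∧ t = Re(trace C)}, Σ := sInf {μ : ℝ | ∃ Y ∈ SEP(A:B), J ≤ Y ∧ Tr_B Y ≤ μ • (1 : Matrix A A ℂ)}, and Wω := sInf {t : ℝ | ∃ E, E admits a separable decomposition across A':(B×B') ∧ ω ≤ E ∧ t = Re(trace E)}. Then Wω ≤ Σ * Wρ. (This is the inequality W_sep(A';BB')_ω ≤ Σ(N) · W_sep(A'A;B')_ρ, equivalent to Proposition 3 after taking logarithms.) -/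

import Mathlib

open Matrix ComplexOrder Kronecker

noncomputable section

/-- Partial transpose over the last (`γ`) factor of a matrix on `α × β × γ`:
`T_γ(X) (a,b,c) (a',b',c') = X (a,b,c') (a',b',c)`. -/
def ptLast {α β γ : Type*} (X : Matrix (α × β × γ) (α × β × γ) ℂ) :
    Matrix (α × β × γ) (α × β × γ) ℂ :=
  Matrix.of fun x y => X (x.1, x.2.1, y.2.2) (y.1, y.2.1, x.2.2)

/-- Partial transpose over `β` of a matrix on `α × β`:
`T_β(X) (a,b) (a',b') = X (a,b') (a',b)`. -/
def ptSnd {α β : Type*} (X : Matrix (α × β) (α × β) ℂ) : Matrix (α × β) (α × β) ℂ :=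
  Matrix.of fun x y => X (x.1, y.2) (y.1, x.2)

/-- Joint partial transpose over `β` and `γ` of a matrix on `α × β × γ`:
`T_{βγ}(X) (a,b,c) (a',b',c') = X (a,b',c') (a',b,c)`. -/
def ptBoth {α β γ : Type*} (X : Matrix (α × β × γ) (α × β × γ) ℂ) :
    Matrix (α × β × γ) (α × β × γ) ℂ :=
  Matrix.of fun x y => X (x.1, y.2.1, y.2.2) (y.1, x.2.1, x.2.2)

/-- Partial trace over the second factor: `(Tr_β X) a a' = ∑ b, X (a,b) (a',b)`. -/
def ptrSnd {α β : Type*} [Fintype β] (X : Matrix (α × β) (α × β) ℂ) : Matrix α α ℂ :=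
  Matrix.of fun a a' => ∑ b, X (a, b) (a', b)

/-- Membership in the separable cone `SEP(α:β)`. -/
def InSepCone {α β : Type*} [Fintype α] [Fintype β] (X : Matrix (α × β) (α × β) ℂ) : Prop :=
  ∃ (n : ℕ) (P : Fin n → Matrix α α ℂ) (Q : Fin n → Matrix β β ℂ),
    (∀ i, (P i).PosSemidef) ∧ (∀ i, (Q i).PosSemidef) ∧
    ∀ x y : α × β, X x y = ∑ i, P i x.1 y.1 * Q i x.2 y.2

theorem aux_link_psd {m n Z A : Type*} [Fintype m] [Fintype n] [Fintype Z] [Fintype A]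
    {M : Matrix m m ℂ} {N : Matrix n n ℂ} (hM : M.PosSemidef) (hN : N.PosSemidef)
    (f : Z → A → m) (g : Z → A → n) :
    (Matrix.of fun x y : Z => ∑ a : A, ∑ a2 : A,
      M (f x a) (f y a2) * N (g x a) (g y a2)).PosSemidef := by
  classical
  have hK := (hM.kronecker hN).submatrix (fun p : Z × A => (f p.1 p.2, g p.1 p.2))
  have h2 := hK.conjTranspose_mul_mul_same
    (Matrix.of fun (p : Z × A) (y : Z) => if p.1 = y then (1 : ℂ) else 0)
  refine (congrArg Matrix.PosSemidef ?_).mpr h2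
  ext x y
  simp only [Matrix.mul_apply, Matrix.of_apply, Matrix.conjTranspose_apply,
    Matrix.submatrix_apply, Matrix.kroneckerMap_apply, Fintype.sum_prod_type]
  simp only [apply_ite star, star_one, star_zero, ite_mul, one_mul, zero_mul, mul_ite, mul_one,
    mul_zero, Finset.sum_ite_irrel, Finset.sum_const_zero, Finset.sum_ite_eq',
    Finset.mem_univ, if_true]
  rw [Finset.sum_comm]

theorem aux_psd_le {m : Type*} [Fintype m] [DecidableEq m]
    {M : Matrix m m ℂ} (hM : M.PosSemidef) :
    ∃ c : ℝ, 0 ≤ c ∧ (c • (1 : Matrix m m ℂ) - M).PosSemidef := by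
  refine ⟨∑ i, hM.1.eigenvalues i, Finset.sum_nonneg fun i _ => hM.eigenvalues_nonneg i, ?_⟩
  set c := ∑ i, hM.1.eigenvalues i with hc
  have hD : (Matrix.diagonal fun i => ((c - hM.1.eigenvalues i : ℝ) : ℂ)).PosSemidef := by
    rw [Matrix.posSemidef_diagonal_iff]
    intro i
    rw [Complex.zero_le_real, sub_nonneg]
    exact Finset.single_le_sum (f := hM.1.eigenvalues)
      (fun i _ => hM.eigenvalues_nonneg i) (Finset.mem_univ i)
  have h2 := hD.mul_mul_conjTranspose_same (hM.1.eigenvectorUnitary : Matrix m m ℂ)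
  convert h2 using 1
  have h3 : (Matrix.diagonal fun i => ((c - hM.1.eigenvalues i : ℝ) : ℂ)) =
    c • (1 : Matrix m m ℂ) - Matrix.diagonal (RCLike.ofReal ∘ hM.1.eigenvalues) := by
    ext i j
    by_cases h : i = j
    · subst h; simp
    · simp [h]
  have h4 : (hM.1.eigenvectorUnitary : Matrix m m ℂ) *
      (hM.1.eigenvectorUnitary : Matrix m m ℂ)ᴴ = 1 :=
    Unitary.coe_mul_star_self hM.1.eigenvectorUnitary
  have h5 := hM.1.spectral_theorem
  rw [Unitary.conjStarAlgAut_apply] at h5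
  rw [h3, mul_sub, sub_mul, mul_smul_comm, smul_mul_assoc, mul_one, h4]
  congr 1

theorem aux_le_sInf_mul {S : Set ℝ} (hS : S.Nonempty) {w t : ℝ} (ht : 0 ≤ t)
    (h : ∀ μ ∈ S, w ≤ μ * t) : w ≤ sInf S * t := by
  rcases ht.eq_or_lt with rfl | ht
  · obtain ⟨μ, hμ⟩ := hS
    simpa using h μ hμ
  · rw [← div_le_iff₀ ht]
    exact le_csInf hS fun μ hμ => (div_le_iff₀ ht).2 (h μ hμ)

theorem aux_trace_re_nonneg {m : Type*} [Fintype m] {M : Matrix m m ℂ} (h : M.PosSemidef) :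
    0 ≤ (M.trace).re := by
  have := (Complex.le_def.1 h.trace_nonneg).1
  simpa using this

/-- `W_sep(A';BB')_ω ≤ Σ(N) ⬝ W_sep(A'A;B')_ρ`: the optimization-value form of
Proposition 3. -/
theorem emax_sdp_value_inequality
    {A' A B' B : Type*}
    [Fintype A'] [Fintype A] [Fintype B'] [Fintype B] [DecidableEq A]
    [Nonempty A'] [Nonempty A] [Nonempty B'] [Nonempty B]
    (ρ : Matrix (A' × A × B') (A' × A × B') ℂ) (J : Matrix (A × B) (A × B) ℂ)
    (hρ : ρ.PosSemidef) (hJ : J.PosSemidef)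
    (ω : Matrix (A' × B × B') (A' × B × B') ℂ)
    (hω : ∀ x y, ω x y = ∑ a : A, ∑ a2 : A,
      ρ (x.1, a, x.2.2) (y.1, a2, y.2.2) * J (a, x.2.1) (a2, y.2.1)) :
    sInf {t : ℝ | ∃ E : Matrix (A' × B × B') (A' × B × B') ℂ,
        (∃ (m : ℕ) (R : Fin m → Matrix A' A' ℂ)
            (W : Fin m → Matrix (B × B') (B × B') ℂ),
          (∀ i, (R i).PosSemidef) ∧ (∀ i, (W i).PosSemidef) ∧
          ∀ x y : A' × B × B', E x y = ∑ i, R i x.1 y.1 * W i x.2 y.2) ∧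
        (E - ω).PosSemidef ∧ t = (E.trace).re}
      ≤ (sInf {μ : ℝ | ∃ Y : Matrix (A × B) (A × B) ℂ, InSepCone Y ∧
            (Y - J).PosSemidef ∧
            (μ • (1 : Matrix A A ℂ) - ptrSnd Y).PosSemidef})
        * sInf {t : ℝ | ∃ C : Matrix (A' × A × B') (A' × A × B') ℂ,
            (∃ (n : ℕ) (P : Fin n → Matrix (A' × A) (A' × A) ℂ)
                (Q : Fin n → Matrix B' B' ℂ),
              (∀ i, (P i).PosSemidef) ∧ (∀ i, (Q i).PosSemidef) ∧
              ∀ x y : A' × A × B',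
                C x y = ∑ i, P i (x.1, x.2.1) (y.1, y.2.1) * Q i x.2.2 y.2.2) ∧
            (C - ρ).PosSemidef ∧ t = (C.trace).re} := by
  classical
  have hcard : (0 : ℝ) ≤ (Fintype.card B : ℝ) := Nat.cast_nonneg _
  apply aux_le_sInf_mul
  · obtain ⟨c, hc, h⟩ := aux_psd_le hJ
    refine ⟨c * Fintype.card B, c • 1, ?_, h, ?_⟩
    · refine ⟨1, fun _ => 1, fun _ => c • 1, fun _ => Matrix.PosSemidef.one,
        fun _ => Matrix.PosSemidef.one.smul hc, ?_⟩
      rintro ⟨a, b⟩ ⟨a', b'⟩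
      by_cases h1 : a = a' <;> by_cases h2 : b = b' <;> simp [Matrix.one_apply, h1, h2]
    · convert Matrix.PosSemidef.zero using 1
      ext a a'
      by_cases h1 : a = a' <;> simp [ptrSnd, Matrix.one_apply, h1, mul_comm]
  · apply Real.sInf_nonneg
    rintro t ⟨C, -, h, rfl⟩
    exact aux_trace_re_nonneg (by simpa using h.add hρ)
  rintro μ ⟨Y, hYs, hY, hμ⟩
  have hYp : Y.PosSemidef := by simpa using hY.add hJ
  have hμ0 : 0 ≤ μ := by
    have h1 : (ptrSnd Y).PosSemidef := by
      have : ptrSnd Y = ∑ b, Y.submatrix (fun a => (a, b)) (fun a => (a, b)) := by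
        ext a a'
        simp [ptrSnd, Matrix.sum_apply]
      rw [this]
      exact Matrix.posSemidef_sum _ fun b _ => hYp.submatrix _
    have h2 : (μ • (1 : Matrix A A ℂ)).PosSemidef := by simpa using hμ.add h1
    obtain ⟨a⟩ := ‹Nonempty A›
    have h3 := h2.diag_nonneg (i := a)
    simpa using h3
  rw [mul_comm]
  apply aux_le_sInf_mul
  · obtain ⟨c, hc, h⟩ := aux_psd_le hρ
    refine ⟨_, c • 1, ?_, h, rfl⟩
    refine ⟨1, fun _ => 1, fun _ => c • 1, fun _ => Matrix.PosSemidef.one,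
        fun _ => Matrix.PosSemidef.one.smul hc, ?_⟩
    rintro ⟨a, b, d⟩ ⟨a', b', d'⟩
    by_cases h1 : a = a' <;> by_cases h2 : b = b' <;> by_cases h3 : d = d' <;>
      simp [Matrix.one_apply, h1, h2, h3]
  · exact hμ0
  rintro t ⟨C, ⟨n, P, Q, hP, hQ, hC⟩, hCρ, rfl⟩
  obtain ⟨k, S, T, hS, hT, hYS⟩ := hYs
  have hCp : C.PosSemidef := by simpa using hCρ.add hρ
  let E : Matrix (A' × B × B') (A' × B × B') ℂ := Matrix.of fun x y => ∑ a : A, ∑ a2 : A,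
      C (x.1, a, x.2.2) (y.1, a2, y.2.2) * Y (a, x.2.1) (a2, y.2.1)
  have hEω : (E - ω).PosSemidef := by
    have h1 := aux_link_psd (Z := A' × B × B') (A := A) hCρ hYp
      (fun x a => (x.1, a, x.2.2)) (fun x a => (a, x.2.1))
    have h2 := aux_link_psd (Z := A' × B × B') (A := A) hρ hY
      (fun x a => (x.1, a, x.2.2)) (fun x a => (a, x.2.1))
    convert h1.add h2 using 1
    ext x y
    simp only [E, Matrix.sub_apply, Matrix.add_apply, Matrix.of_apply, hω,
      ← Finset.sum_sub_distrib, ← Finset.sum_add_distrib]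
    refine Finset.sum_congr rfl fun a _ => Finset.sum_congr rfl fun a2 _ => ?_
    ring
  have hωp : ω.PosSemidef := by
    have h2 := aux_link_psd (Z := A' × B × B') (A := A) hρ hJ
      (fun x a => (x.1, a, x.2.2)) (fun x a => (a, x.2.1))
    convert h2 using 1
    ext x y
    exact hω x y
  have hEtr : (E.trace).re ≤ (C.trace).re * μ := by
    have h1 := aux_trace_re_nonneg (aux_link_psd (Z := A' × B') (A := A) hCp hμ
      (fun x a => (x.1, a, x.2)) (fun x a => a))
    have h2 : (Matrix.of fun x y : A' × B' => ∑ a : A, ∑ a2 : A,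
        C (x.1, a, x.2) (y.1, a2, y.2) * (μ • (1 : Matrix A A ℂ) - ptrSnd Y) a a2).trace
        = C.trace * μ - E.trace := by
      simp only [Matrix.trace, Matrix.diag, Matrix.of_apply, E, Matrix.sub_apply, mul_sub,
        Finset.sum_sub_distrib, Fintype.sum_prod_type, ptrSnd]
      congr 1
      · simp only [Finset.sum_mul, Matrix.smul_apply, Matrix.one_apply, smul_ite, smul_zero,
          mul_ite, mul_zero, Finset.sum_ite_eq, Finset.mem_univ, if_true]
        refine Finset.sum_congr rfl fun x _ => ?_
        rw [Finset.sum_comm]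
        simp
      · refine Finset.sum_congr rfl fun x _ => ?_
        conv_rhs => rw [Finset.sum_comm]
        refine Finset.sum_congr rfl fun d _ => ?_
        simp only [Finset.mul_sum]
        conv_rhs => rw [Finset.sum_comm]
        refine Finset.sum_congr rfl fun a _ => ?_
        rw [Finset.sum_comm]
    rw [h2] at h1
    simp at h1
    linarith
  refine le_trans (csInf_le ?_ ?_) hEtr
  · refine ⟨0, ?_⟩
    rintro t ⟨F, -, h, rfl⟩
    exact aux_trace_re_nonneg (by simpa using h.add hωp)
  refine ⟨E, ?_, hEω, rfl⟩
  let e : Fin (n * k) ≃ Fin n × Fin k := finProdFinEquiv.symm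
  refine ⟨n * k, fun i => Matrix.of fun x y => ∑ a : A, ∑ a2 : A,
      P (e i).1 (x, a) (y, a2) * S (e i).2 a a2,
    fun i => Matrix.of fun x y => T (e i).2 x.1 y.1 * Q (e i).1 x.2 y.2,
    fun i => aux_link_psd (hP _) (hS _) (fun x a => (x, a)) (fun x a => a),
    fun i => (hT _).kronecker (hQ _), ?_⟩
  intro x y
  simp only [Matrix.of_apply, E]
  rw [Equiv.sum_comp e (fun p : Fin n × Fin k => (∑ a : A, ∑ a2 : A,
      P p.1 (x.1, a) (y.1, a2) * S p.2 a a2) * (T p.2 x.2.1 y.2.1 * Q p.1 x.2.2 y.2.2))]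
  simp only [Finset.sum_mul]
  conv_rhs => rw [Finset.sum_comm]
  refine Finset.sum_congr rfl fun a _ => ?_
  conv_rhs => rw [Finset.sum_comm]
  refine Finset.sum_congr rfl fun a2 _ => ?_
  rw [hC, hYS, Finset.sum_mul_sum, Fintype.sum_prod_type]
  refine Finset.sum_congr rfl fun i _ => Finset.sum_congr rfl fun j _ => ?_
  ring
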